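/- Let n, m be positive integers and Θ a real n×m matrix. Then α_×(ᵗΘ) ≥ (n·α_×(Θ) + n − 1) / ((m−1)·α_×(Θ) + m), where if α_×(Θ) = +∞ the right-hand side is interpreted as n/(m−1) when m ≥ 2 and as +∞ when m = 1. -/

import Mathlib

open MeasureTheory Filter Matrix

noncomputable section

/-- Geometric mean of the absolute values of the coordinates: Π(z). -/
def Pigeo {k : ℕ} (z : Fin k → ℝ) : ℝ := (∏ i, |z i|) ^ ((1:ℝ)/k)

/-- Geometric mean of `max 1 |z i|`: Π'(z). -/
def Pigeo' {k : ℕ} (z : Fin k → ℝ) : ℝ := (∏ i, max 1 |z i|) ^ ((1:ℝ)/k)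

/-- Coordinatewise cast of an integer vector to a real vector. -/
def ivec {k : ℕ} (x : Fin k → ℤ) : Fin k → ℝ := fun i => (x i : ℝ)

/-- The constant Δ_d = (2^{d-1}√d)⁻¹ · vol_{d-1}{x ∈ [-1,1]^d : x₁+⋯+x_d = 0}. -/
def Delta (d : ℕ) : ℝ :=
  ((2:ℝ) ^ (d - 1) * Real.sqrt d)⁻¹ *
    (μH[(d:ℝ) - 1] {x : EuclideanSpace ℝ (Fin d) | (∀ i, |x i| ≤ 1) ∧ ∑ i, x i = 0}).toReal

/-- For every sufficiently large t there are x ∈ ℤ^m \ {0}, y ∈ ℤ^n with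
Π'(x) ≤ t and Π(Θx − y) ≤ t^{−γ}. -/
def UnifMultApprox (n m : ℕ) (Θ : Matrix (Fin n) (Fin m) ℝ) (γ : ℝ) : Prop :=
  ∀ᶠ t : ℝ in Filter.atTop, ∃ x : Fin m → ℤ, ∃ y : Fin n → ℤ, x ≠ 0 ∧
    Pigeo' (ivec x) ≤ t ∧ Pigeo (Θ.mulVec (ivec x) - ivec y) ≤ t ^ (-γ)

/-- The uniform multiplicative Diophantine exponent α_×(Θ), as an extended real. -/
def malpha (n m : ℕ) (Θ : Matrix (Fin n) (Fin m) ℝ) : EReal :=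
  sSup {x : EReal | ∃ γ : ℝ, x = (γ : EReal) ∧ UnifMultApprox n m Θ γ}

/-- For every sufficiently large t there are x ∈ ℤ^m \ {0}, y ∈ ℤ^n with
|x|_∞ ≤ t and |Θx − y|_∞ ≤ t^{−γ}. -/
def UnifOrdApprox (n m : ℕ) (Θ : Matrix (Fin n) (Fin m) ℝ) (γ : ℝ) : Prop :=
  ∀ᶠ t : ℝ in Filter.atTop, ∃ x : Fin m → ℤ, ∃ y : Fin n → ℤ, x ≠ 0 ∧
    ‖ivec x‖ ≤ t ∧ ‖Θ.mulVec (ivec x) - ivec y‖ ≤ t ^ (-γ)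

/-- The uniform (ordinary) Diophantine exponent α(Θ), as an extended real. -/
def oalpha (n m : ℕ) (Θ : Matrix (Fin n) (Fin m) ℝ) : EReal :=
  sSup {x : EReal | ∃ γ : ℝ, x = (γ : EReal) ∧ UnifOrdApprox n m Θ γ}

/-- Minkowski's linear forms theorem, with a strict volume condition. -/
lemma exists_int_abs_mulVec_le {ι : Type*} [Fintype ι] [DecidableEq ι] (A : Matrix ι ι ℝ)
    (a : ι → ℝ) (ha : ∀ i, 0 < a i) (hA : A.det ≠ 0) (hprod : |A.det| < ∏ i, a i) :
    ∃ w : ι → ℤ, w ≠ 0 ∧ ∀ i, |(A *ᵥ (fun j => (w j : ℝ))) i| ≤ a i := by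
  classical
  let L := (Submodule.span ℤ (Set.range (Pi.basisFun ℝ ι))).toAddSubgroup
  have fund : IsAddFundamentalDomain L (ZSpan.fundamentalDomain (Pi.basisFun ℝ ι)) volume :=
    ZSpan.isAddFundamentalDomain' _ _
  have : Countable L := inferInstanceAs
    (Countable (Submodule.span ℤ (Set.range (Pi.basisFun ℝ ι))))
  let s : Set (ι → ℝ) :=
    (Matrix.toLin' A) ⁻¹' (Set.pi Set.univ fun i => Set.Icc (-a i) (a i))
  have hmem : ∀ v, v ∈ s ↔ ∀ i, |(A *ᵥ v) i| ≤ a i := by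
    intro v
    simp [s, abs_le, Pi.le_def, forall_and]
  have hsymm : ∀ v ∈ s, -v ∈ s := by
    intro v hv
    rw [hmem] at hv ⊢
    simpa [Matrix.mulVec_neg] using hv
  have hconv : Convex ℝ s :=
    (convex_pi fun i _ => convex_Icc (-a i) (a i)).linear_preimage (Matrix.toLin' A)
  have hdet : LinearMap.det (Matrix.toLin' A) ≠ 0 := by simpa using hA
  have hvol : volume s = ENNReal.ofReal (|A.det|⁻¹ * ∏ i, (2 * a i)) := by
    rw [Measure.addHaar_preimage_linearMap _ hdet, volume_pi_pi, LinearMap.det_toLin', abs_inv,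
      ENNReal.ofReal_mul (by positivity), ENNReal.ofReal_prod_of_nonneg]
    · congr 1
      refine Finset.prod_congr rfl fun i _ => ?_
      rw [Real.volume_Icc]
      ring_nf
    · intro i _
      have := ha i
      positivity
  have hlt : volume (ZSpan.fundamentalDomain (Pi.basisFun ℝ ι)) *
      2 ^ Module.finrank ℝ (ι → ℝ) < volume s := by
    rw [hvol, ZSpan.fundamentalDomain_pi_basisFun,
      Module.finrank_fintype_fun_eq_card]
    have h1 : (1 : ENNReal) * 2 ^ Fintype.card ι = ENNReal.ofReal (2 ^ Fintype.card ι) := by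
      rw [ENNReal.ofReal_pow (by norm_num)]
      simp
    simp only [sub_zero, ENNReal.ofReal_one, Finset.prod_const_one, Real.volume_Ico,
      volume_pi_pi]
    have hpos : 0 < |A.det| := abs_pos.2 hA
    rw [h1, Finset.prod_mul_distrib, Finset.prod_const, Finset.card_univ]
    refine (ENNReal.ofReal_lt_ofReal_iff_of_nonneg (by positivity)).2 ?_
    rw [← div_eq_inv_mul, lt_div_iff₀ hpos]
    exact mul_lt_mul_of_pos_left hprod (by positivity)
  obtain ⟨x, hx0, hxs⟩ :=
    exists_ne_zero_mem_lattice_of_measure_mul_two_pow_lt_measure fund hsymm hconv hlt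
  have hx : ∀ i, ∃ z : ℤ, (z : ℝ) = (x : ι → ℝ) i := by
    intro i
    have := ((Pi.basisFun ℝ ι).mem_span_iff_repr_mem ℤ (x : ι → ℝ)).1 x.2 i
    simpa using this
  choose w hw using hx
  have hwx : (fun j => (w j : ℝ)) = (x : ι → ℝ) := funext hw
  refine ⟨w, ?_, ?_⟩
  · rintro rfl
    apply hx0
    ext i
    simp [← hwx]
  · rw [hwx]
    exact (hmem _).1 hxs

/-- Lattice points in the section of a box by the hyperplane `c ⬝ᵥ (A *ᵥ w) = 0`, where the
coordinates outside `S` are forced to vanish. -/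
lemma exists_int_mem_section {K : Type*} [Fintype K] [DecidableEq K] (A : Matrix K K ℝ)
    (hdet : |A.det| = 1) (c : K → ℝ)
    (hc : ∀ w : K → ℤ, ∃ z : ℤ, c ⬝ᵥ (A *ᵥ (fun k => (w k : ℝ))) = z)
    (S : Finset K) (a : K → ℝ) (ha : ∀ k, 0 < a k)
    (hS : ∀ k ∉ S, a k < 1 ∧ ∀ w : K → ℤ, ∃ z : ℤ, (A *ᵥ (fun k => (w k : ℝ))) k = z)
    (hne : ∃ k ∈ S, c k ≠ 0) (hprod : ∀ k ∈ S, 2 * (|c k| * a k) < ∏ k, a k) :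
    ∃ w : K → ℤ, w ≠ 0 ∧ (∀ k ∉ S, (A *ᵥ (fun k => (w k : ℝ))) k = 0) ∧
      ∀ k ∈ S, |(A *ᵥ (fun k => (w k : ℝ))) k| ≤ Fintype.card K * a k := by
  classical
  obtain ⟨k₁, hk₁, hck₁⟩ := hne
  obtain ⟨k₀, hk₀, hmax⟩ := S.exists_max_image (fun k => |c k| * a k) ⟨k₁, hk₁⟩
  have hck₀ : 0 < |c k₀| := by
    have h1 : 0 < |c k₁| * a k₁ := mul_pos (abs_pos.2 hck₁) (ha k₁)
    have h2 := h1.trans_le (hmax k₁ hk₁)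
    exact pos_of_mul_pos_left h2 (ha k₀).le
  set B := A.updateRow k₀ (∑ k, c k • A k) with hB
  have hBdet : |B.det| = |c k₀| := by
    rw [hB, Matrix.det_updateRow_sum, smul_eq_mul, abs_mul, hdet, mul_one]
  have hBk₀ : ∀ v, (B *ᵥ v) k₀ = c ⬝ᵥ (A *ᵥ v) := by
    intro v
    simp only [hB, Matrix.mulVec, Matrix.updateRow_self, sum_dotProduct, smul_dotProduct]
    rfl
  have hBk : ∀ v k, k ≠ k₀ → (B *ᵥ v) k = (A *ᵥ v) k := by
    intro v k hk
    simp only [hB, Matrix.mulVec, Matrix.updateRow_ne hk]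
  obtain ⟨w, hw0, hw⟩ := exists_int_abs_mulVec_le B (Function.update a k₀ (1 / 2))
    (by
      intro k
      rcases eq_or_ne k k₀ with rfl | hk
      · simp
      · simpa [hk] using ha k)
    (by rw [← abs_pos, hBdet]; exact hck₀)
    (by
      rw [hBdet, Finset.prod_update_of_mem (Finset.mem_univ k₀)]
      have h1 := hprod k₀ hk₀
      rw [← Finset.mul_prod_erase _ _ (Finset.mem_univ k₀), ← Finset.sdiff_singleton_eq_erase]
        at h1
      have h2 := ha k₀
      have h3 : a k₀ * (2 * |c k₀|) < a k₀ * ∏ k ∈ Finset.univ \ {k₀}, a k := by linarith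
      have := lt_of_mul_lt_mul_left h3 h2.le
      linarith)
  set t := A *ᵥ (fun k => (w k : ℝ)) with ht
  have hct : c ⬝ᵥ t = 0 := by
    obtain ⟨z, hz⟩ := hc w
    have h1 := hw k₀
    rw [hBk₀, Function.update_self, ← ht, hz] at h1
    rw [hz]
    have h2 : |(z : ℝ)| < 1 := by linarith
    have h3 : |z| < 1 := by exact_mod_cast h2
    rw [Int.abs_lt_one_iff.1 h3]
    simp
  have hta : ∀ k, k ≠ k₀ → |t k| ≤ a k := by
    intro k hk
    have h1 := hw k
    rwa [hBk _ _ hk, Function.update_of_ne hk] at h1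
  have ht0 : ∀ k ∉ S, t k = 0 := by
    intro k hk
    obtain ⟨h1, h2⟩ := hS k hk
    obtain ⟨z, hz⟩ := h2 w
    have h3 := hta k (by rintro rfl; exact hk hk₀)
    rw [← ht] at hz
    rw [hz] at h3 ⊢
    have h4 : |(z : ℝ)| < 1 := by linarith
    have h5 : |z| < 1 := by exact_mod_cast h4
    rw [Int.abs_lt_one_iff.1 h5]
    simp
  have hcard : (1 : ℝ) ≤ Fintype.card K := by
    exact_mod_cast Fintype.card_pos_iff.2 ⟨k₀⟩
  refine ⟨w, hw0, ht0, fun k hk => ?_⟩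
  rcases eq_or_ne k k₀ with rfl | hkk
  · have h1 : c k * t k = -∑ l ∈ Finset.univ.erase k, c l * t l := by
      have := Finset.add_sum_erase Finset.univ (fun l => c l * t l) (Finset.mem_univ k)
      rw [dotProduct] at hct
      linarith
    have h2 : |c k| * |t k| ≤ ∑ l ∈ Finset.univ.erase k, |c k| * a k := by
      rw [← abs_mul, h1, abs_neg]
      refine (Finset.abs_sum_le_sum_abs _ _).trans (Finset.sum_le_sum fun l hl => ?_)
      by_cases hlS : l ∈ S
      · rw [abs_mul]
        exact (mul_le_mul_of_nonneg_left (hta l (Finset.ne_of_mem_erase hl))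
          (abs_nonneg _)).trans (hmax l hlS)
      · rw [ht0 l hlS]
        simp only [mul_zero, abs_zero]
        have := ha k
        positivity
    have h3 : ∑ l ∈ Finset.univ.erase k, |c k| * a k ≤ ∑ l : K, |c k| * a k :=
      Finset.sum_le_sum_of_subset_of_nonneg (Finset.erase_subset _ _) fun _ _ _ => by
        have := ha k
        positivity
    have h4 : ∑ l : K, |c k| * a k = Fintype.card K * (|c k| * a k) := by simp
    refine le_of_mul_le_mul_left ?_ hck₀
    linarith
  · refine (hta k hkk).trans ?_
    have := ha k
    nlinarith

/-- Numbers `N j ≥ 0` of small product, truncated at `1` and then raised to a common threshold so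
that their product is a prescribed `P`. -/
lemma exists_truncation {ι : Type*} [Fintype ι] (N : ι → ℝ) (hN : ∀ j, 0 ≤ N j) {P : ℝ}
    (hP0 : 0 < P) (hP1 : P ≤ 1) (hNP : ∏ j, N j ≤ P) :
    ∃ R : ι → ℝ, (∀ j, 0 < R j ∧ R j ≤ 1) ∧ (∀ j, N j ≤ 1 → N j ≤ R j) ∧
      (∀ j, 1 < N j → R j = 1) ∧ ∏ j, R j = P := by
  have hcont : Continuous fun r : ℝ => ∏ j, max (min (N j) 1) r := by fun_prop
  have h0 : ∏ j, max (min (N j) 1) 0 ≤ P := by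
    refine (Finset.prod_le_prod (fun j _ => le_max_right _ _) fun j _ => ?_).trans hNP
    exact max_le (min_le_left _ _) (hN j)
  have h1 : P ≤ ∏ j, max (min (N j) 1) 1 := by simpa using hP1
  obtain ⟨r, ⟨hr0, hr1⟩, hr⟩ := intermediate_value_Icc zero_le_one hcont.continuousOn ⟨h0, h1⟩
  simp only at hr
  refine ⟨fun j => max (min (N j) 1) r, fun j => ⟨?_, max_le (min_le_right _ _) hr1⟩,
    fun j hj => ?_, fun j hj => ?_, hr⟩
  · have hne : max (min (N j) 1) r ≠ 0 := fun h => by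
      rw [Finset.prod_eq_zero (Finset.mem_univ j) h] at hr
      exact hP0.ne hr
    exact lt_of_le_of_ne (hr0.trans (le_max_right _ _)) hne.symm
  · simp [hj]
  · simp [hj.le, hr1]

/-- The linear forms `(ᵗΘ u - v, u)` in the integer variables `(v, u)`. -/
def dualForms {n m : ℕ} (Θ : Matrix (Fin n) (Fin m) ℝ) :
    Matrix (Fin m ⊕ Fin n) (Fin m ⊕ Fin n) ℝ :=
  Matrix.fromBlocks (-1) Θᵀ 0 1

lemma abs_det_dualForms {n m : ℕ} (Θ : Matrix (Fin n) (Fin m) ℝ) : |(dualForms Θ).det| = 1 := by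
  simp [dualForms, Matrix.det_neg, abs_pow]

lemma dualForms_mulVec {n m : ℕ} (Θ : Matrix (Fin n) (Fin m) ℝ) (w : Fin m ⊕ Fin n → ℤ) :
    dualForms Θ *ᵥ (fun k => (w k : ℝ)) =
      Sum.elim (Θᵀ *ᵥ ivec (w ∘ Sum.inr) - ivec (w ∘ Sum.inl)) (ivec (w ∘ Sum.inr)) := by
  have h : (fun k => (w k : ℝ)) = Sum.elim (ivec (w ∘ Sum.inl)) (ivec (w ∘ Sum.inr)) := by
    ext (i | j) <;> rfl
  rw [h, dualForms, Matrix.fromBlocks_mulVec]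
  simp [Matrix.neg_mulVec, sub_eq_neg_add]

lemma dotProduct_dualForms_mulVec {n m : ℕ} (Θ : Matrix (Fin n) (Fin m) ℝ) (x : Fin m → ℤ)
    (y : Fin n → ℤ) (w : Fin m ⊕ Fin n → ℤ) :
    Sum.elim (ivec x) (-(Θ *ᵥ ivec x - ivec y)) ⬝ᵥ (dualForms Θ *ᵥ (fun k => (w k : ℝ))) =
      ((∑ j, y j * w (Sum.inr j) - ∑ i, x i * w (Sum.inl i) : ℤ) : ℝ) := by
  rw [dualForms_mulVec, sumElim_dotProduct_sumElim]
  rw [dotProduct_sub, neg_dotProduct, sub_dotProduct, Matrix.mulVec_transpose,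
    dotProduct_comm (ivec x) (_ ᵥ* Θ), ← Matrix.dotProduct_mulVec,
    dotProduct_comm (ivec (w ∘ Sum.inr))]
  simp only [dotProduct, ivec, Function.comp]
  push_cast
  ring

/-- If `(v, u)` is nonzero and the forms `ᵗΘ u - v` are all less than `1` in absolute value, then
`u` is nonzero. -/
lemma inr_ne_zero_of_dualForms_lt_one {n m : ℕ} (Θ : Matrix (Fin n) (Fin m) ℝ)
    {w : Fin m ⊕ Fin n → ℤ} (hw : w ≠ 0)
    (hlt : ∀ i, |(Θᵀ *ᵥ ivec (w ∘ Sum.inr) - ivec (w ∘ Sum.inl)) i| < 1) :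
    w ∘ Sum.inr ≠ 0 := by
  intro hu
  apply hw
  have hz : ivec (0 : Fin n → ℤ) = 0 := by ext; simp [ivec]
  ext (i | j)
  · have h := hlt i
    rw [hu, hz, Matrix.mulVec_zero, zero_sub, Pi.neg_apply, abs_neg] at h
    have h' : |w (Sum.inl i)| < 1 := by
      simp only [ivec, Function.comp] at h
      exact_mod_cast h
    simpa using Int.abs_lt_one_iff.1 h'
  · exact congrFun hu j

/-- Transference for a single approximating point. -/
lemma exists_transposed_point {n m : ℕ} (hm : 0 < m) (Θ : Matrix (Fin n) (Fin m) ℝ)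
    {X U h : ℝ} (hX : 0 < X) (hU : 0 < U) (hUh : U ≤ h) (hh : (m + n) * h < 1)
    (hvol : 2 ^ (n + 1) * (X ^ m * U ^ n) * h < h ^ (m + n))
    {x : Fin m → ℤ} (hx : x ≠ 0) (y : Fin n → ℤ)
    (hxX : ∏ i, max 1 |ivec x i| ≤ X ^ m)
    (hyU : ∏ j, |(Θ *ᵥ ivec x - ivec y) j| ≤ U ^ n) :
    ∃ u : Fin n → ℤ, ∃ v : Fin m → ℤ, u ≠ 0 ∧
      ∏ j, max 1 |ivec u j| ≤ ((m + n) * (h / U)) ^ n ∧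
      ∏ i, |(Θᵀ *ᵥ ivec u - ivec v) i| ≤ ((m + n) * (h / X)) ^ m := by
  classical
  have hh0 : 0 < h := hU.trans_le hUh
  set M := Θ *ᵥ ivec x - ivec y with hM
  obtain ⟨R, hR, hNR, hR1, hRprod⟩ := exists_truncation (fun j => |M j| / h)
    (fun j => by positivity) (P := (U / h) ^ n) (by positivity)
    (pow_le_one₀ (by positivity) ((div_le_one hh0).2 hUh))
    (by
      rw [Finset.prod_div_distrib, div_pow, Finset.prod_const, Finset.card_univ, Fintype.card_fin]
      gcongr)
  set Q := ∏ i, max 1 |ivec x i| with hQ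
  have hQ0 : 0 < Q := Finset.prod_pos fun i _ => by positivity
  set lam := (X ^ m / Q) ^ ((m : ℝ)⁻¹) with hlam
  have hlam1 : 1 ≤ lam := Real.one_le_rpow ((one_le_div hQ0).2 hxX) (by positivity)
  have hlamm : lam ^ m = X ^ m / Q := Real.rpow_inv_natCast_pow (by positivity) hm.ne'
  let V : Fin m → ℝ := fun i => h / (lam * max 1 |ivec x i|)
  have hV0 : ∀ i, 0 < V i := fun i => by positivity
  have hVh : ∀ i, V i ≤ h := fun i => by
    refine div_le_self hh0.le ?_
    nlinarith [le_max_left 1 |ivec x i|]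
  have hVprod : ∏ i, V i = (h / X) ^ m := by
    simp only [V, Finset.prod_div_distrib, Finset.prod_mul_distrib, Finset.prod_const,
      Finset.card_univ, Fintype.card_fin]
    rw [hlamm, ← hQ, div_mul_cancel₀ _ hQ0.ne', div_pow]
  let Y : Fin n → ℝ := fun j => if |M j| / h ≤ 1 then 1 / R j else 1 / 2
  have hY : ∀ j, 1 / 2 * (1 / R j) ≤ Y j := fun j => by
    have h1 := (hR j).1
    have h2 : 0 < 1 / R j := by positivity
    by_cases hj : |M j| / h ≤ 1
    · simp only [Y, if_pos hj]
      linarith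
    · simp only [Y, if_neg hj, hR1 j (not_le.1 hj)]
      norm_num
  have hY0 : ∀ j, 0 < Y j := fun j => by
    have h1 := (hR j).1
    exact lt_of_lt_of_le (by positivity) (hY j)
  have hRinv : ∏ j, 1 / R j = (h / U) ^ n := by
    rw [Finset.prod_div_distrib, hRprod, Finset.prod_const_one, ← _root_.one_div_pow, one_div_div]
  have hYprod : (1 / 2) ^ n * (h / U) ^ n ≤ ∏ j, Y j := by
    rw [← hRinv]
    calc (1 / 2 : ℝ) ^ n * ∏ j, 1 / R j = ∏ j, 1 / 2 * (1 / R j) := by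
          rw [Finset.prod_mul_distrib]; simp
      _ ≤ ∏ j, Y j := Finset.prod_le_prod (fun j _ => by
          have h1 := (hR j).1
          positivity) fun j _ => hY j
  have hprod : 2 * h < ∏ k, Sum.elim V Y k := by
    rw [Fintype.prod_sum_type]
    simp only [Sum.elim_inl, Sum.elim_inr]
    rw [hVprod]
    calc 2 * h < (h / X) ^ m * ((1 / 2) ^ n * (h / U) ^ n) := by
          have e : (h / X) ^ m * ((1 / 2) ^ n * (h / U) ^ n) =
              h ^ (m + n) / (2 ^ n * (X ^ m * U ^ n)) := by
            rw [div_pow, div_pow, div_pow, pow_add]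
            field_simp
            simp
          rw [e, lt_div_iff₀ (by positivity)]
          calc _ = 2 ^ (n + 1) * (X ^ m * U ^ n) * h := by ring
            _ < _ := hvol
      _ ≤ _ := by gcongr
  let S : Finset (Fin m ⊕ Fin n) :=
    Finset.univ.filter fun k => Sum.elim (fun _ => True) (fun j => |M j| / h ≤ 1) k
  have hSl : ∀ i, Sum.inl i ∈ S := fun i => by simp [S]
  have hSr : ∀ j, Sum.inr j ∈ S ↔ |M j| / h ≤ 1 := fun j => by simp [S]
  obtain ⟨w, hw0, hwS, hw⟩ := exists_int_mem_section (dualForms Θ) (abs_det_dualForms Θ)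
    (Sum.elim (ivec x) (-M)) (fun w => ⟨_, dotProduct_dualForms_mulVec Θ x y w⟩) S
    (Sum.elim V Y)
    (by
      rintro (i | j)
      · exact hV0 i
      · exact hY0 j)
    (by
      rintro (i | j) hk
      · exact absurd (hSl i) hk
      · rw [hSr] at hk
        refine ⟨?_, fun w => ⟨w (Sum.inr j), ?_⟩⟩
        · simp only [Sum.elim_inr, Y, if_neg hk]
          norm_num
        · rw [dualForms_mulVec]
          rfl)
    (by
      obtain ⟨i, hi⟩ := Function.ne_iff.1 hx
      exact ⟨Sum.inl i, hSl i, by simpa [ivec] using hi⟩)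
    (by
      rintro (i | j) hk
      · refine lt_of_le_of_lt ?_ hprod
        simp only [Sum.elim_inl]
        have h1 : |ivec x i| * V i ≤ h := by
          simp only [V]
          rw [mul_div_assoc', div_le_iff₀ (by positivity), mul_comm]
          gcongr
          nlinarith [le_max_left 1 |ivec x i|, le_max_right 1 |ivec x i|]
        linarith
      · refine lt_of_le_of_lt ?_ hprod
        rw [hSr] at hk
        simp only [Sum.elim_inr, Y, if_pos hk, Pi.neg_apply, abs_neg]
        have h1 := hNR j hk
        have h2 := (hR j).1
        have h3 : |M j| * (1 / R j) ≤ h := by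
          rw [div_le_iff₀ hh0] at h1
          rw [mul_one_div, div_le_iff₀ h2]
          linarith
        linarith)
  rw [dualForms_mulVec] at hwS hw
  have hcard : (Fintype.card (Fin m ⊕ Fin n) : ℝ) = m + n := by simp
  rw [hcard] at hw
  have hmn : (1 : ℝ) ≤ m + n := by
    have : (1 : ℝ) ≤ m := by exact_mod_cast hm
    have : (0 : ℝ) ≤ n := by positivity
    linarith
  have hwl : ∀ i, |(Θᵀ *ᵥ ivec (w ∘ Sum.inr) - ivec (w ∘ Sum.inl)) i| ≤ (m + n) * V i :=
    fun i => hw _ (hSl i)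
  refine ⟨w ∘ Sum.inr, w ∘ Sum.inl, inr_ne_zero_of_dualForms_lt_one Θ hw0 fun i => ?_, ?_, ?_⟩
  · refine (hwl i).trans_lt (lt_of_le_of_lt ?_ hh)
    have := hVh i
    gcongr
  · calc ∏ j, max 1 |ivec (w ∘ Sum.inr) j| ≤ ∏ j, (m + n) * (1 / R j) := by
          refine Finset.prod_le_prod (fun j _ => by positivity) fun j _ => ?_
          obtain ⟨h1, h2⟩ := hR j
          have h3 : 1 ≤ 1 / R j := (one_le_div h1).2 h2
          refine max_le (by nlinarith) ?_
          by_cases hj : |M j| / h ≤ 1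
          · simpa [Y, hj] using hw _ ((hSr j).2 hj)
          · have := hwS _ (mt (hSr j).1 hj)
            rw [Sum.elim_inr] at this
            rw [this, abs_zero]
            positivity
      _ = _ := by
          rw [Finset.prod_mul_distrib, hRinv, mul_pow]
          simp
  · calc ∏ i, |(Θᵀ *ᵥ ivec (w ∘ Sum.inr) - ivec (w ∘ Sum.inl)) i| ≤ ∏ i, (m + n) * V i :=
          Finset.prod_le_prod (fun i _ => abs_nonneg _) fun i _ => hwl i
      _ = _ := by
          rw [Finset.prod_mul_distrib, hVprod, mul_pow]
          simp

lemma geom_mean_le_iff {k : ℕ} (hk : 0 < k) {P T : ℝ} (hP : 0 ≤ P) (hT : 0 ≤ T) :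
    P ^ ((1 : ℝ) / k) ≤ T ↔ P ≤ T ^ k := by
  rw [one_div, Real.rpow_inv_le_iff_of_pos hP hT (by exact_mod_cast hk), Real.rpow_natCast]

lemma Pigeo_le_iff {k : ℕ} (hk : 0 < k) (z : Fin k → ℝ) {T : ℝ} (hT : 0 ≤ T) :
    Pigeo z ≤ T ↔ ∏ i, |z i| ≤ T ^ k :=
  geom_mean_le_iff hk (Finset.prod_nonneg fun _ _ => abs_nonneg _) hT

lemma Pigeo'_le_iff {k : ℕ} (hk : 0 < k) (z : Fin k → ℝ) {T : ℝ} (hT : 0 ≤ T) :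
    Pigeo' z ≤ T ↔ ∏ i, max 1 |z i| ≤ T ^ k :=
  geom_mean_le_iff hk (Finset.prod_nonneg fun _ _ => by positivity) hT

/-- The asymptotic form of the transference for a given admissible exponent `γ`. -/
lemma UnifMultApprox.transpose {n m : ℕ} (hn : 0 < n) (hm : 0 < m)
    {Θ : Matrix (Fin n) (Fin m) ℝ} {γ β : ℝ} (h : UnifMultApprox n m Θ γ)
    (hγ : (m : ℝ) / n < γ) (hβ : β * ((m - 1) * γ + m) < n * γ + n - 1) :
    UnifMultApprox m n Θᵀ β := by
  have hn1 : (1 : ℝ) ≤ n := by exact_mod_cast hn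
  have hm1 : (1 : ℝ) ≤ m := by exact_mod_cast hm
  have hd : (0 : ℝ) < m + n - 1 := by linarith
  have hγ' : (m : ℝ) < n * γ := by rwa [div_lt_iff₀ (by linarith), mul_comm] at hγ
  have hγ0 : 0 < γ := lt_trans (by positivity) hγ
  obtain ⟨r, hr⟩ : ∃ r : ℝ, r * (m + n - 1) = n * γ - m :=
    ⟨(n * γ - m) / (m + n - 1), div_mul_cancel₀ _ hd.ne'⟩
  have hr0 : 0 < r := by nlinarith
  have hp : (γ - r) * (m + n - 1) = (m - 1) * γ + m := by linarith
  have hq : (1 + r) * (m + n - 1) = n * γ + n - 1 := by linarith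
  have hp0 : 0 < γ - r := by nlinarith
  have hqp : 0 < 1 + r - (γ - r) * β := by
    have : 0 < (1 + r - (γ - r) * β) * (m + n - 1) := by
      rw [sub_mul, hq, mul_right_comm, hp]
      linarith
    exact pos_of_mul_pos_left this hd.le
  set C : ℝ := 2 ^ (n + 2) with hC
  have hC0 : 0 < C := by positivity
  have hC1 : 1 ≤ C := one_le_pow₀ (by norm_num)
  set D : ℝ := (m + n) * C with hD
  have hD0 : 0 < D := by positivity
  have hlim : ∀ s : ℝ, 0 < s → Tendsto (fun t : ℝ => t ^ s) atTop atTop :=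
    fun s hs => tendsto_rpow_atTop hs
  have key : ∀ᶠ t : ℝ in atTop, ∃ u : Fin n → ℤ, ∃ v : Fin m → ℤ, u ≠ 0 ∧
      Pigeo' (ivec u) ≤ D * t ^ (γ - r) ∧
      Pigeo (Θᵀ *ᵥ ivec u - ivec v) ≤ (D * t ^ (γ - r)) ^ (-β) := by
    filter_upwards [h, eventually_ge_atTop 1, (hlim r hr0).eventually_gt_atTop D,
      (hlim _ hqp).eventually_ge_atTop (D * D ^ β)] with t ⟨x, y, hx, hxt, hyt⟩ ht1 htr htq
    have ht0 : 0 < t := by linarith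
    set η := C * t ^ (-r) with hη
    have htr0 : 0 < t ^ r := by positivity
    rw [Pigeo'_le_iff hm _ ht0.le] at hxt
    rw [Pigeo_le_iff hn _ (by positivity)] at hyt
    obtain ⟨u, v, hu, h1, h2⟩ := exists_transposed_point hm Θ (h := η) ht0
      (Real.rpow_pos_of_pos ht0 (-γ))
      (by
        have h1 : t ^ (-γ) ≤ t ^ (-r) := Real.rpow_le_rpow_of_exponent_le ht1 (by linarith)
        have h2 : 0 < t ^ (-r) := by positivity
        nlinarith)
      (by
        rw [hη, ← mul_assoc, ← hD, Real.rpow_neg ht0.le, ← div_eq_mul_inv, div_lt_one htr0]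
        exact htr)
      (by
        have e1 : t ^ m * (t ^ (-γ)) ^ n * t ^ (-r) = (t ^ (-r)) ^ (m + n) := by
          rw [← Real.rpow_natCast t m, ← Real.rpow_natCast _ n, ← Real.rpow_natCast _ (m + n),
            ← Real.rpow_mul ht0.le, ← Real.rpow_mul ht0.le, ← Real.rpow_add ht0,
            ← Real.rpow_add ht0]
          congr 1
          push_cast
          linarith
        have e2 : 2 ^ (n + 1) * C < C ^ (m + n) := by
          have h1 : C ^ 2 ≤ C ^ (m + n) := pow_le_pow_right₀ hC1 (by omega)
          have h2 : (2 : ℝ) ^ (n + 1) < C := by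
            rw [hC]
            exact pow_lt_pow_right₀ (by norm_num) (by omega)
          nlinarith
        calc 2 ^ (n + 1) * (t ^ m * (t ^ (-γ)) ^ n) * η
            = 2 ^ (n + 1) * C * (t ^ m * (t ^ (-γ)) ^ n * t ^ (-r)) := by rw [hη]; ring
          _ < C ^ (m + n) * (t ^ (-r)) ^ (m + n) := by
              rw [e1]
              exact mul_lt_mul_of_pos_right e2 (by positivity)
          _ = η ^ (m + n) := by rw [hη, mul_pow])
      hx y hxt hyt
    have e1 : (m + n) * (η / t ^ (-γ)) = D * t ^ (γ - r) := by
      rw [hη, hD, mul_div_assoc, ← Real.rpow_sub ht0, ← mul_assoc]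
      ring_nf
    have e2 : (m + n) * (η / t) = D * t ^ (-(1 + r)) := by
      rw [hη, hD, mul_div_assoc, ← Real.rpow_sub_one ht0.ne', ← mul_assoc]
      ring_nf
    rw [e1] at h1
    rw [e2] at h2
    refine ⟨u, v, hu, (Pigeo'_le_iff hn _ (by positivity)).2 h1,
      ((Pigeo_le_iff hm _ (by positivity)).2 h2).trans ?_⟩
    rw [Real.mul_rpow hD0.le (by positivity), ← Real.rpow_mul ht0.le]
    have e3 : t ^ ((γ - r) * -β) = t ^ (1 + r - (γ - r) * β) * t ^ (-(1 + r)) := by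
      rw [← Real.rpow_add ht0]
      ring_nf
    have e4 : D = D ^ (-β) * (D * D ^ β) := by
      rw [Real.rpow_neg hD0.le]
      field_simp
    rw [e3, ← mul_assoc]
    refine mul_le_mul_of_nonneg_right ?_ (by positivity)
    calc D = D ^ (-β) * (D * D ^ β) := e4
      _ ≤ _ := by gcongr
  have htend : Tendsto (fun T : ℝ => (T / D) ^ (γ - r)⁻¹) atTop atTop :=
    (hlim _ (inv_pos.2 hp0)).comp (tendsto_id.atTop_div_const hD0)
  filter_upwards [htend.eventually key, eventually_gt_atTop 0] with T hT hT0
  have e : D * ((T / D) ^ (γ - r)⁻¹) ^ (γ - r) = T := by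
    rw [← Real.rpow_mul (by positivity), inv_mul_cancel₀ hp0.ne', Real.rpow_one,
      mul_div_cancel₀ _ hD0.ne']
  rwa [e] at hT

/-- Dirichlet's bound. -/
lemma unifMultApprox_transpose_of_lt {n m : ℕ} (hn : 0 < n) (hm : 0 < m)
    (Θ : Matrix (Fin n) (Fin m) ℝ) {β : ℝ} (hβ : β < (n : ℝ) / m) :
    UnifMultApprox m n Θᵀ β := by
  have hm0 : (0 : ℝ) < m := by exact_mod_cast hm
  have hn0 : (0 : ℝ) < n := by exact_mod_cast hn
  obtain ⟨β', h1, h2⟩ := exists_between (max_lt hβ (div_pos hn0 hm0))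
  obtain ⟨hββ', hβ'0⟩ := max_lt_iff.1 h1
  rw [lt_div_iff₀ hm0] at h2
  filter_upwards [eventually_gt_atTop 1] with t ht
  have ht0 : 0 < t := by linarith
  obtain ⟨w, hw0, hw⟩ := exists_int_abs_mulVec_le (dualForms Θ)
    (Sum.elim (fun _ => t ^ (-β')) fun _ => t)
    (by rintro (i | j) <;> simp only [Sum.elim_inl, Sum.elim_inr] <;> positivity)
    (by
      rw [← abs_pos, abs_det_dualForms]
      norm_num)
    (by
      rw [abs_det_dualForms, Fintype.prod_sum_type]
      simp only [Sum.elim_inl, Sum.elim_inr, Finset.prod_const, Finset.card_univ,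
        Fintype.card_fin]
      rw [← Real.rpow_natCast, ← Real.rpow_natCast, ← Real.rpow_mul ht0.le,
        ← Real.rpow_add ht0]
      exact Real.one_lt_rpow ht (by linarith))
  rw [dualForms_mulVec] at hw
  have hwl : ∀ i, |(Θᵀ *ᵥ ivec (w ∘ Sum.inr) - ivec (w ∘ Sum.inl)) i| ≤ t ^ (-β') :=
    fun i => hw (Sum.inl i)
  have hwr : ∀ j, |ivec (w ∘ Sum.inr) j| ≤ t := fun j => hw (Sum.inr j)
  refine ⟨w ∘ Sum.inr, w ∘ Sum.inl, inr_ne_zero_of_dualForms_lt_one Θ hw0 fun i =>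
    (hwl i).trans_lt (Real.rpow_lt_one_of_one_lt_of_neg ht (by linarith)), ?_, ?_⟩
  · rw [Pigeo'_le_iff hn _ ht0.le]
    calc _ ≤ ∏ j : Fin n, t :=
          Finset.prod_le_prod (fun j _ => by positivity) fun j _ => max_le ht.le (hwr j)
      _ = t ^ n := by simp
  · refine le_trans ?_ (Real.rpow_le_rpow_of_exponent_le ht.le (neg_le_neg hββ'.le))
    rw [Pigeo_le_iff hm _ (by positivity)]
    calc _ ≤ ∏ i : Fin m, t ^ (-β') :=
          Finset.prod_le_prod (fun i _ => abs_nonneg _) fun i _ => hwl i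
      _ = _ := by simp

lemma le_malpha {n m : ℕ} {Θ : Matrix (Fin n) (Fin m) ℝ} {γ : ℝ} (h : UnifMultApprox n m Θ γ) :
    (γ : EReal) ≤ malpha n m Θ :=
  le_sSup ⟨γ, rfl, h⟩

lemma exists_unifMultApprox_of_lt_malpha {n m : ℕ} {Θ : Matrix (Fin n) (Fin m) ℝ} {a : ℝ}
    (h : (a : EReal) < malpha n m Θ) : ∃ γ, a < γ ∧ UnifMultApprox n m Θ γ := by
  obtain ⟨_, ⟨γ, rfl, hγ⟩, hlt⟩ := lt_sSup_iff.1 h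
  exact ⟨γ, EReal.coe_lt_coe_iff.1 hlt, hγ⟩

lemma coe_le_malpha_of_forall_lt {n m : ℕ} {Θ : Matrix (Fin n) (Fin m) ℝ} {b : ℝ}
    (h : ∀ β < b, UnifMultApprox n m Θ β) : (b : EReal) ≤ malpha n m Θ :=
  EReal.ge_of_forall_gt_iff_ge.1 fun z hz => le_malpha (h z (EReal.coe_lt_coe_iff.1 hz))

lemma div_le_malpha {n m : ℕ} (hn : 0 < n) (hm : 0 < m) (Θ : Matrix (Fin n) (Fin m) ℝ) :
    (((m : ℝ) / n : ℝ) : EReal) ≤ malpha n m Θ :=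
  coe_le_malpha_of_forall_lt fun _ hβ => unifMultApprox_transpose_of_lt hm hn Θᵀ hβ

/-- Corollary 7: α_×(ᵗΘ) ≥ (n α_×(Θ) + n − 1)/((m−1) α_×(Θ) + m), where for
α_×(Θ) = +∞ the right-hand side is read as n/(m−1) if m ≥ 2, and as +∞ if m = 1. -/
theorem malpha_transpose_dyson (n m : ℕ) (hn : 0 < n) (hm : 0 < m)
    (Θ : Matrix (Fin n) (Fin m) ℝ) :
    (malpha n m Θ ≠ ⊤ →
      malpha m n Θᵀ ≥ ((((n : ℝ) * (malpha n m Θ).toReal + n - 1) /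
        (((m : ℝ) - 1) * (malpha n m Θ).toReal + m) : ℝ) : EReal)) ∧
    (malpha n m Θ = ⊤ → m = 1 → malpha m n Θᵀ = ⊤) ∧
    (malpha n m Θ = ⊤ → 2 ≤ m → malpha m n Θᵀ ≥ (((n : ℝ) / ((m : ℝ) - 1) : ℝ) : EReal)) := by
  have hn1 : (1 : ℝ) ≤ n := by exact_mod_cast hn
  have hm1 : (1 : ℝ) ≤ m := by exact_mod_cast hm
  refine ⟨fun htop => ?_, fun htop h1 => ?_, fun htop h2 => ?_⟩
  · have hdir := div_le_malpha hn hm Θ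
    have hbot : malpha n m Θ ≠ ⊥ := ne_bot_of_le_ne_bot (EReal.coe_ne_bot _) hdir
    obtain ⟨a, ha⟩ : ∃ a : ℝ, (a : EReal) = malpha n m Θ :=
      ⟨_, EReal.coe_toReal htop hbot⟩
    rw [← ha, EReal.coe_le_coe_iff, div_le_iff₀ (by linarith)] at hdir
    rw [← ha, EReal.toReal_coe]
    have ha0 : 0 < a := by nlinarith
    have hden : 0 < (m - 1) * a + m := by nlinarith
    refine coe_le_malpha_of_forall_lt fun β hβ => ?_
    rw [lt_div_iff₀ hden] at hβ
    rcases hdir.eq_or_lt with hma | hma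
    · refine unifMultApprox_transpose_of_lt hn hm Θ ?_
      rw [lt_div_iff₀ (by linarith)]
      have h3 : β * m * (m + n - 1) < n * (m + n - 1) := by
        have e : n * (β * ((m - 1) * a + m)) = β * m * (m + n - 1) := by
          linear_combination (-(β * (m - 1))) * hma
        rw [← e]
        refine mul_lt_mul_of_pos_left ?_ (by linarith)
        linarith
      exact lt_of_mul_lt_mul_right h3 (by linarith)
    · have hcont : Continuous fun γ : ℝ => n * γ + n - 1 - β * ((m - 1) * γ + m) := by fun_prop
      have hopen : ∀ᶠ γ in nhds a, 0 < n * γ + n - 1 - β * ((m - 1) * γ + m) :=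
        hcont.continuousAt.eventually_const_lt (by linarith)
      obtain ⟨l, hl, hla⟩ := (mem_nhds_iff_exists_Ioo_subset.1 hopen).imp fun l ⟨_, h, h'⟩ =>
        And.intro h.1 fun γ (h1 : l < γ) (h2 : γ ≤ a) => h' ⟨h1, h2.trans_lt h.2⟩
      obtain ⟨γ, hγ, hγa⟩ := exists_unifMultApprox_of_lt_malpha (Θ := Θ) (a := max l (m / n)) (by
        rw [← ha, EReal.coe_lt_coe_iff]
        exact max_lt hl ((div_lt_iff₀ (by linarith)).2 (by linarith)))
      obtain ⟨h1, h2⟩ := max_lt_iff.1 hγ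
      have h3 : γ ≤ a := by
        have := le_malpha hγa
        rwa [← ha, EReal.coe_le_coe_iff] at this
      have h4 : 0 < n * γ + n - 1 - β * ((m - 1) * γ + m) := hla γ h1 h3
      exact hγa.transpose hn hm h2 (by linarith)
  · subst h1
    refine EReal.eq_top_iff_forall_lt _ |>.2 fun b => ?_
    obtain ⟨γ, hγ, hγa⟩ := exists_unifMultApprox_of_lt_malpha (Θ := Θ)
      (a := max ((1 : ℕ) / n) (b + 1)) (by rw [htop]; exact EReal.coe_lt_top _)
    obtain ⟨h1, h2⟩ := max_lt_iff.1 hγ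
    have h0 : 0 < γ := lt_trans (by positivity) h1
    refine lt_of_lt_of_le (EReal.coe_lt_coe_iff.2 (lt_add_one b))
      (le_malpha (hγa.transpose hn hm h1 ?_))
    push_cast
    nlinarith
  · have hm2 : (2 : ℝ) ≤ m := by exact_mod_cast h2
    refine coe_le_malpha_of_forall_lt fun β hβ => ?_
    rw [lt_div_iff₀ (by linarith)] at hβ
    have hpos : 0 < n - β * (m - 1) := by linarith
    obtain ⟨γ, hγ, hγa⟩ := exists_unifMultApprox_of_lt_malpha (Θ := Θ)
      (a := max (m / n) ((β * m - n + 1) / (n - β * (m - 1))))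
      (by rw [htop]; exact EReal.coe_lt_top _)
    obtain ⟨h1, h2⟩ := max_lt_iff.1 hγ
    rw [div_lt_iff₀ hpos] at h2
    exact hγa.transpose hn hm h1 (by linarith)
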